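/- Let 0 < m ≤ 1. There exists a constant c = c(m) > 0 such that for all u, ψ ∈ ℝ and all μ > 0 with ψ ≤ u and u^m ≤ ψ^m + μ^m, one has 𝔟[u^m, ψ^m + μ^m] ≤ c (|u|^(1−m) + μ^(1−m)) μ^(2m), where for w ∈ ℝ we set 𝔟[u^m, w] := (m/(1+m))(|w|^((1+m)/m) − |u|^(1+m)) − u (w − u^m). -/

import Mathlib

/-!
Put `a = u^m`, `w = ψ^m + μ^m`, `δ = μ^m` and `p = 1/m ≥ 1`, so that `u = a^p` as signed powers and
`𝔟 = (|w|^(p+1) - |a|^(p+1))/(p+1) - a^p (w - a)`. The hypotheses give `0 ≤ w - a ≤ δ`, the lower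
bound directly and the upper one from monotonicity of the signed power.

The function `F x = |x|^(p+1)/(p+1)` is convex with `F' x = x^p`, hence `𝔟 ≤ (w^p - a^p) (w - a)`
(`bterm_le_mul_sub`), and `w^p - a^p ≤ p M^(p-1) (w - a)` whenever `|a|, |w| ≤ M`
(`spow_sub_le`). With `M = |a| + δ` this bounds `𝔟` by
`p (|a| + δ)^(p-1) δ² ≤ p 2^(p-1) (|a|^(p-1) + δ^(p-1)) δ²`, and `|a|^(p-1) = |u|^(1-m)`,
`δ^(p-1) = μ^(1-m)`. Both convexity inequalities come from Young's inequality in the form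
`young_tangent`.
-/

/-- Signed power: `a^k := |a|^(k-1) a`. -/
noncomputable def spow (a k : ℝ) : ℝ := |a| ^ (k - 1) * a

/-- The boundary term `𝔟[u^m, w]` for `w ∈ ℝ`:
`𝔟[u^m, w] := (m/(1+m))(|w|^((1+m)/m) − |u|^(1+m)) − u (w − u^m)`. -/
noncomputable def btermW (m u w : ℝ) : ℝ :=
  m / (1 + m) * (|w| ^ ((1 + m) / m) - |u| ^ (1 + m)) - u * (w - spow u m)

theorem spow_of_nonneg {a k : ℝ} (hk : 0 < k) (ha : 0 ≤ a) : spow a k = a ^ k := by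
  rcases ha.eq_or_lt with rfl | ha
  · simp [spow, Real.zero_rpow hk.ne']
  · rw [spow, abs_of_pos ha, Real.rpow_sub_one ha.ne', div_mul_cancel₀ _ ha.ne']

theorem spow_neg (a k : ℝ) : spow (-a) k = -spow a k := by
  simp [spow]

theorem abs_spow {a k : ℝ} (hk : 0 < k) : |spow a k| = |a| ^ k := by
  rw [← spow_of_nonneg hk (abs_nonneg a), spow, spow, abs_mul, abs_abs,
    abs_of_nonneg (Real.rpow_nonneg (abs_nonneg a) _)]

theorem spow_mono {a b k : ℝ} (hk : 0 < k) (h : a ≤ b) : spow a k ≤ spow b k := by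
  have key : ∀ x y : ℝ, 0 ≤ x → x ≤ y → spow x k ≤ spow y k := fun x y hx hxy => by
    rw [spow_of_nonneg hk hx, spow_of_nonneg hk (hx.trans hxy)]
    exact Real.rpow_le_rpow hx hxy hk.le
  have h0 : spow 0 k = 0 := by simp [spow]
  rcases le_total 0 a with ha | ha
  · exact key a b ha h
  rcases le_total 0 b with hb | hb
  · have h1 := key 0 b le_rfl hb
    have h2 := key 0 (-a) le_rfl (by linarith)
    rw [spow_neg] at h2
    linarith
  · have h1 := key (-b) (-a) (by linarith) (by linarith)
    rw [spow_neg, spow_neg] at h1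
    linarith

theorem spow_spow_inv {u m : ℝ} (hm : 0 < m) : spow (spow u m) (1 / m) = u := by
  have hp : 0 < 1 / m := by positivity
  have key : ∀ x : ℝ, 0 ≤ x → spow (spow x m) (1 / m) = x := fun x hx => by
    rw [spow_of_nonneg hm hx, spow_of_nonneg hp (Real.rpow_nonneg hx _), ← Real.rpow_mul hx,
      mul_one_div_cancel hm.ne', Real.rpow_one]
  rcases le_total 0 u with hu | hu
  · exact key u hu
  · have h := key (-u) (by linarith)
    rw [spow_neg, spow_neg] at h
    linarith

/-- Young's inequality, written as the tangent-line inequality at `y` for `x ↦ x ^ q`. -/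
theorem young_tangent {q x y : ℝ} (hq : 1 ≤ q) (hx : 0 ≤ x) (hy : 0 ≤ y) :
    q * (x * y ^ (q - 1)) ≤ x ^ q + (q - 1) * y ^ q := by
  have hq0 : 0 < q := by linarith
  have h1 : 1 / q ≤ 1 := by rw [div_le_one hq0]; exact hq
  have h := Real.geom_mean_le_arith_mean2_weighted (w₁ := 1 / q) (w₂ := 1 - 1 / q)
    (by positivity) (by linarith) (Real.rpow_nonneg hx q) (Real.rpow_nonneg hy q) (by ring)
  rw [← Real.rpow_mul hx, ← Real.rpow_mul hy, mul_one_div_cancel hq0.ne', Real.rpow_one,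
    show q * (1 - 1 / q) = q - 1 by field_simp] at h
  calc q * (x * y ^ (q - 1)) ≤ q * (1 / q * x ^ q + (1 - 1 / q) * y ^ q) := by gcongr
    _ = _ := by field_simp

/-- The convexity bound `F w - F a - F' a (w - a) ≤ (F' w - F' a) (w - a)` for
`F x = |x|^(p+1)/(p+1)`. -/
theorem bterm_le_mul_sub {p a w : ℝ} (hp : 1 ≤ p) :
    1 / (p + 1) * (|w| ^ (p + 1) - |a| ^ (p + 1)) - spow a p * (w - a)
      ≤ (spow w p - spow a p) * (w - a) := by
  have hp0 : 0 < p := by linarith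
  have hY := young_tangent (q := p + 1) (by linarith) (abs_nonneg a) (abs_nonneg w)
  rw [add_sub_cancel_right] at hY
  have h1 : spow w p * a ≤ |a| * |w| ^ p := by
    rw [← abs_spow hp0, mul_comm, ← abs_mul]
    exact le_abs_self _
  have h2 : spow w p * w = |w| ^ (p + 1) := by
    have h := spow_of_nonneg hp0 (abs_nonneg w)
    have h' := spow_of_nonneg (by linarith : 0 < p + 1) (abs_nonneg w)
    rw [spow, abs_abs] at h h'
    rw [add_sub_cancel_right] at h'
    rw [← h', ← h, spow, mul_assoc, mul_assoc, abs_mul_abs_self]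
  have h3 : |w| ^ (p + 1) - |a| ^ (p + 1) ≤ (p + 1) * (|w| ^ (p + 1) - spow w p * a) := by
    nlinarith
  have h4 : 1 / (p + 1) * (|w| ^ (p + 1) - |a| ^ (p + 1)) ≤ |w| ^ (p + 1) - spow w p * a := by
    rw [one_div, inv_mul_le_iff₀ (by linarith)]
    exact h3
  linarith

theorem spow_sub_le {p a w M : ℝ} (hp : 1 ≤ p) (haw : a ≤ w) (ha : |a| ≤ M) (hw : |w| ≤ M) :
    spow w p - spow a p ≤ p * M ^ (p - 1) * (w - a) := by
  have hp0 : 0 < p := by linarith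
  have pos : ∀ x y : ℝ, 0 ≤ x → x ≤ y → y ≤ M →
      spow y p - spow x p ≤ p * M ^ (p - 1) * (y - x) := fun x y hx hxy hy => by
    have hy0 := hx.trans hxy
    have hY := young_tangent hp hx hy0
    have h1 : y * y ^ (p - 1) = y ^ p := by
      have h := spow_of_nonneg hp0 hy0
      rw [spow, abs_of_nonneg hy0] at h
      rw [← h, mul_comm]
    rw [spow_of_nonneg hp0 hx, spow_of_nonneg hp0 hy0]
    calc y ^ p - x ^ p ≤ p * y ^ (p - 1) * (y - x) := by rw [← h1] at hY ⊢; nlinarith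
      _ ≤ p * M ^ (p - 1) * (y - x) := by
        have := Real.rpow_le_rpow hy0 hy (by linarith : 0 ≤ p - 1)
        have : 0 ≤ y - x := by linarith
        gcongr
  have h0 : spow 0 p = 0 := by simp [spow]
  have ha' := abs_le.1 ha
  have hw' := abs_le.1 hw
  rcases le_total 0 a with ha0 | ha0
  · exact pos a w ha0 haw hw'.2
  rcases le_total 0 w with hw0 | hw0
  · have h1 := pos 0 w le_rfl hw0 hw'.2
    have h2 := pos 0 (-a) le_rfl (by linarith) (by linarith)
    rw [spow_neg] at h2
    linarith
  · have h1 := pos (-w) (-a) (by linarith) (by linarith) (by linarith)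
    rw [spow_neg, spow_neg] at h1
    linarith

theorem add_rpow_le {r x y : ℝ} (hr : 0 ≤ r) (hx : 0 ≤ x) (hy : 0 ≤ y) :
    (x + y) ^ r ≤ 2 ^ r * (x ^ r + y ^ r) := by
  have hmax : (max x y) ^ r ≤ x ^ r + y ^ r := by
    have h1 := Real.rpow_nonneg hx r
    have h2 := Real.rpow_nonneg hy r
    rcases max_choice x y with h | h <;> rw [h] <;> linarith
  calc (x + y) ^ r ≤ (2 * max x y) ^ r := by
        apply Real.rpow_le_rpow (by positivity) _ hr
        linarith [le_max_left x y, le_max_right x y]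
    _ = 2 ^ r * (max x y) ^ r := Real.mul_rpow (by norm_num) (hx.trans (le_max_left x y))
    _ ≤ _ := by gcongr

/-- For `0 < m ≤ 1` there is `c = c(m) > 0` such that for all `u, ψ ∈ ℝ`, `μ > 0` with
`ψ ≤ u` and `u^m ≤ ψ^m + μ^m`:
`𝔟[u^m, ψ^m + μ^m] ≤ c (|u|^(1−m) + μ^(1−m)) μ^(2m)`. -/
theorem boundary_term_near_obstacle (m : ℝ) (hm0 : 0 < m) (hm1 : m ≤ 1) :
    ∃ c : ℝ, 0 < c ∧ ∀ u ψ μ : ℝ, 0 < μ → ψ ≤ u →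
      spow u m ≤ spow ψ m + μ ^ m →
      btermW m u (spow ψ m + μ ^ m) ≤
        c * (|u| ^ (1 - m) + μ ^ (1 - m)) * μ ^ (2 * m) := by
  have hp : 1 ≤ 1 / m := by rw [le_div_iff₀ hm0]; linarith
  refine ⟨1 / m * 2 ^ (1 / m - 1), by positivity, fun u ψ μ hμ hψ hw => ?_⟩
  have hmono := spow_mono hm0 hψ
  have hδ : 0 < μ ^ m := Real.rpow_pos_of_pos hμ m
  have hu : spow (spow u m) (1 / m) = u := spow_spow_inv hm0
  have e1 : |u| ^ (1 + m) = |spow u m| ^ (1 / m + 1) := by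
    rw [abs_spow hm0, ← Real.rpow_mul (abs_nonneg u)]
    congr 1; field_simp
  have e2 : |u| ^ (1 - m) = |spow u m| ^ (1 / m - 1) := by
    rw [abs_spow hm0, ← Real.rpow_mul (abs_nonneg u)]
    congr 1; field_simp
  have e3 : μ ^ (1 - m) = (μ ^ m) ^ (1 / m - 1) := by
    rw [← Real.rpow_mul hμ.le]
    congr 1; field_simp
  have e4 : μ ^ (2 * m) = μ ^ m * μ ^ m := by rw [← Real.rpow_add hμ]; congr 1; ring
  have e5 : (1 + m) / m = 1 / m + 1 := by field_simp
  have e6 : m / (1 + m) = 1 / (1 / m + 1) := by field_simp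
  have hb : btermW m u (spow ψ m + μ ^ m) = 1 / (1 / m + 1) *
      (|spow ψ m + μ ^ m| ^ (1 / m + 1) - |spow u m| ^ (1 / m + 1)) -
      spow (spow u m) (1 / m) * (spow ψ m + μ ^ m - spow u m) := by
    rw [btermW, e1, e5, e6, hu]
  rw [hb, e2, e3, e4]
  clear hb e1 e2 e3 e4 e5 e6 hu
  generalize spow u m = a at *
  generalize μ ^ m = δ at *
  generalize hwdef : spow ψ m + δ = w at *
  generalize 1 / m = p at *
  have hwa : 0 ≤ w - a := by linarith
  have hwa' : w - a ≤ δ := by linarith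
  have hwM : |w| ≤ |a| + δ := by
    have h := abs_add_le a (w - a)
    rw [add_sub_cancel, abs_of_nonneg hwa] at h
    linarith
  calc _ ≤ (spow w p - spow a p) * (w - a) := bterm_le_mul_sub hp
    _ ≤ p * (|a| + δ) ^ (p - 1) * (w - a) * (w - a) := by
      gcongr
      exact spow_sub_le hp hw (by linarith) hwM
    _ ≤ p * (2 ^ (p - 1) * (|a| ^ (p - 1) + δ ^ (p - 1))) * δ * δ := by
      have := add_rpow_le (by linarith : 0 ≤ p - 1) (abs_nonneg a) hδ.le
      gcongr
    _ = _ := by ring
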